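/- arXiv:1903.10039 — 6 statements merged into one kernel-verified Lean document; each statement's English description precedes it below -/
import Mathlib

section
/- Let n, p be positive integers, let β ≥ 2 be an even integer, and let D > 0, α ≥ 0, λ ≥ 0 be real constants. Consider the constrained problem: minimize over (w,t) ∈ ℝ² the function g(w,t) = (1/n) w^β D − α w + (λ/(n p²)) t D subject to t − w ≥ 0 and t + w ≥ 0. If (w*, t*) is a global minimizer of this problem, then w* = ( S(nα/D, λ/p²) / β )^{1/(β−1)}. -/
/-!
Put `a = nα/D` and `μ = λ/p²`. Multiplying the objective by `n/D` and taking `t = |w|` shows that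
`w*` minimizes `h(w) = w^β - a w + μ |w|`. Since `β` is even and `a ≥ 0`, a negative `w*` would be
beaten by `0`. If `w* > 0`, Fermat's theorem gives `β w*^(β-1) = a - μ`, which is then positive
and equals `S(a, μ)`. If `w* = 0`, then `a ≤ μ`, because otherwise `h` is negative at
small positive points; hence `S(a, μ) = 0`.
-/

/-- The soft-thresholding function: `S(x,y) = x − y` if `x > y`, `x + y` if `x < −y`,
and `0` otherwise. -/
noncomputable def softThresh (x y : ℝ) : ℝ :=
  if x > y then x - y else if x < -y then x + y else 0

/-- First-order condition at an interior minimizer of `w^β - c w` on the nonnegative half-line. -/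
lemma stationary_of_pos_minimizer (β : ℕ) (c w : ℝ) (hw : 0 < w)
    (h : ∀ v : ℝ, 0 ≤ v → w ^ β - c * w ≤ v ^ β - c * v) :
    (β : ℝ) * w ^ (β - 1) = c := by
  have hmin : IsLocalMin (fun v : ℝ => v ^ β - c * v) w := by
    filter_upwards [lt_mem_nhds hw] with v hv using h v hv.le
  have hd : HasDerivAt (fun v : ℝ => v ^ β - c * v) ((β : ℝ) * w ^ (β - 1) - c * 1) w :=
    (hasDerivAt_pow β w).sub ((hasDerivAt_id w).const_mul c)
  have := hmin.hasDerivAt_eq_zero hd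
  linarith

/-- If `0` minimizes `w^β - c w` on the nonnegative half-line, the slope `-c` at `0` is
nonnegative. -/
lemma nonpos_of_zero_minimizer (β : ℕ) (hβ : 2 ≤ β) (c : ℝ)
    (h : ∀ v : ℝ, 0 ≤ v → 0 ≤ v ^ β - c * v) : c ≤ 0 := by
  by_contra! hc
  -- At `v = min 1 (c/2)` one has `v^β ≤ v² ≤ (c/2) v < c v`.
  have hv : 0 < min 1 (c / 2) := lt_min one_pos (by linarith)
  have h1 := h _ hv.le
  have h2 := pow_le_pow_of_le_one hv.le (min_le_left 1 (c / 2)) hβ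
  have h3 := min_le_right 1 (c / 2)
  nlinarith

/-- A global minimizer `(w*, t*)` of
`(1/n) w^β D − α w + (λ/(n p²)) t D` subject to `t − w ≥ 0`, `t + w ≥ 0`
satisfies `w* = ( S(nα/D, λ/p²) / β )^{1/(β−1)}`. -/
theorem lwkmeans_constrained_minimizer_formula
    (n p : ℕ) (hn : 0 < n) (hp : 0 < p)
    (β : ℕ) (hβ2 : 2 ≤ β) (hβeven : Even β)
    (D α lam : ℝ) (hD : 0 < D) (hα : 0 ≤ α) (hlam : 0 ≤ lam)
    (w' t' : ℝ)
    (hfeas : t' - w' ≥ 0 ∧ t' + w' ≥ 0)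
    (hopt : ∀ w t : ℝ, t - w ≥ 0 → t + w ≥ 0 →
      (1 / (n : ℝ)) * w' ^ β * D - α * w' + (lam / ((n : ℝ) * (p : ℝ) ^ 2)) * t' * D
        ≤ (1 / (n : ℝ)) * w ^ β * D - α * w + (lam / ((n : ℝ) * (p : ℝ) ^ 2)) * t * D) :
    w' = (softThresh ((n : ℝ) * α / D) (lam / (p : ℝ) ^ 2) / (β : ℝ))
            ^ ((1 : ℝ) / ((β : ℝ) - 1)) := by
  have hn' : (0 : ℝ) < n := by exact_mod_cast hn
  have hp' : (0 : ℝ) < p := by exact_mod_cast hp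
  have hβ' : (2 : ℝ) ≤ β := by exact_mod_cast hβ2
  obtain ⟨a, ha⟩ : ∃ a : ℝ, a = (n : ℝ) * α / D := ⟨_, rfl⟩
  obtain ⟨μ, hμ⟩ : ∃ μ : ℝ, μ = lam / (p : ℝ) ^ 2 := ⟨_, rfl⟩
  rw [← ha, ← hμ]
  have ha0 : 0 ≤ a := by rw [ha]; positivity
  have hμ0 : 0 ≤ μ := by rw [hμ]; positivity
  have hscale : ∀ w t : ℝ,
      (1 / (n : ℝ)) * w ^ β * D - α * w + (lam / ((n : ℝ) * (p : ℝ) ^ 2)) * t * D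
        = (D / n) * (w ^ β - a * w + μ * t) := by
    intro w t
    rw [ha, hμ]
    field_simp
  have hmin : ∀ w : ℝ, 0 ≤ w → w' ^ β - a * w' + μ * t' ≤ w ^ β - (a - μ) * w := by
    intro w hw
    have h := hopt w w (by linarith) (by linarith)
    rw [hscale, hscale] at h
    have := le_of_mul_le_mul_left h (by positivity)
    linarith
  have hβ0 : β ≠ 0 := by omega
  have hw0 : 0 ≤ w' := by
    by_contra! hneg
    have h0 := hmin 0 le_rfl
    have h1 : 0 < w' ^ β := hβeven.pow_pos hneg.ne
    have h2 : 0 ≤ μ * t' := mul_nonneg hμ0 (by linarith [hfeas.1, hfeas.2])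
    simp only [zero_pow hβ0, mul_zero, sub_zero] at h0
    nlinarith
  have hmin' : ∀ w : ℝ, 0 ≤ w → w' ^ β - (a - μ) * w' ≤ w ^ β - (a - μ) * w := by
    intro w hw
    have h2 : μ * w' ≤ μ * t' := mul_le_mul_of_nonneg_left (by linarith [hfeas.1]) hμ0
    linarith [hmin w hw]
  rcases hw0.eq_or_lt with h0 | hpos
  · subst h0
    have hc : a - μ ≤ 0 := nonpos_of_zero_minimizer β hβ2 _ fun v hv => by
      simpa [hβ0] using hmin' v hv
    rw [softThresh, if_neg (by linarith), if_neg (by linarith), zero_div,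
      Real.zero_rpow (one_div_ne_zero (by linarith))]
  · have hst := stationary_of_pos_minimizer β (a - μ) w' hpos hmin'
    have hc : 0 < a - μ := by rw [← hst]; positivity
    have hcast : (β : ℝ) - 1 = ((β - 1 : ℕ) : ℝ) := by
      rw [Nat.cast_sub (by omega), Nat.cast_one]
    rw [softThresh, if_pos (by linarith), ← hst, mul_div_cancel_left₀ _ (by positivity), hcast,
      one_div, Real.pow_rpow_inv_natCast hw0 (by omega)]
end

section
/- Let n, p be positive integers, let β ≥ 2 be an even integer, and let D > 0, α ≥ 0, λ ≥ 0 be real constants. Then the function f : ℝ → ℝ given by f(w) = (1/n) w^β D − α w + (λ/(n p²)) |w| D has a global minimizer over ℝ; this minimizer is unique and equals w* = ( S(nα/D, λ/p²) / β )^{1/(β−1)}. -/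
/-- An even power lies strictly above each of its tangent lines, off the point of tangency. -/
lemma even_pow_tangent_lt {β : ℕ} (h2 : 2 ≤ β) (he : Even β) {t w : ℝ} (hne : w ≠ t) :
    t ^ β + (β * t ^ (β - 1)) * (w - t) < w ^ β := by
  have hc := he.strictConvexOn_pow (by omega)
  have hd := hasDerivAt_pow β t
  rcases lt_or_gt_of_ne hne with h | h
  · have := hc.slope_lt_of_hasDerivAt (Set.mem_univ w) (Set.mem_univ t) h hd
    rw [slope_def_field, div_lt_iff₀ (by linarith)] at this
    linarith
  · have := hc.lt_slope_of_hasDerivAt (Set.mem_univ t) (Set.mem_univ w) h hd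
    rw [slope_def_field, lt_div_iff₀ (by linarith)] at this
    linarith

lemma softThresh_eq_max {a b : ℝ} (ha : 0 ≤ a) (hb : 0 ≤ b) :
    softThresh a b = max (a - b) 0 := by
  unfold softThresh
  split_ifs with h1 h2
  · rw [max_eq_left (by linarith)]
  · linarith
  · rw [max_eq_right (by linarith)]

/-- The point `w*` solves the stationarity equation `β w*^(β-1) = s`. -/
lemma root_stationary {β : ℕ} (h2 : 2 ≤ β) {s : ℝ} (hs : 0 ≤ s) :
    (β : ℝ) * ((s / (β : ℝ)) ^ ((1 : ℝ) / ((β : ℝ) - 1))) ^ (β - 1) = s := by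
  have hβ : (β : ℝ) ≠ 0 := by positivity
  have h := Real.rpow_inv_natCast_pow (x := s / β) (n := β - 1) (by positivity) (by omega)
  rw [Nat.cast_sub (by omega), Nat.cast_one] at h
  rw [one_div, h, mul_div_cancel₀ _ hβ]

/-- The rescaled objective `w^β - a w + b |w|` has `t` as a strict global minimizer, where `t ≥ 0`
satisfies `β t^(β-1) = max (a - b) 0`. -/
lemma lwkmeans_objective_lt {β : ℕ} (h2 : 2 ≤ β) (he : Even β) {a b t w : ℝ}
    (ha : 0 ≤ a) (hb : 0 ≤ b) (ht : 0 ≤ t) (hst : (β : ℝ) * t ^ (β - 1) = max (a - b) 0)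
    (hne : w ≠ t) :
    t ^ β - a * t + b * |t| < w ^ β - a * w + b * |w| := by
  have h := even_pow_tangent_lt h2 he hne
  rw [hst] at h
  have hw : a * w - b * |w| ≤ max (a - b) 0 * w := by
    rcases le_total 0 w with h0 | h0
    · rw [abs_of_nonneg h0]
      nlinarith [mul_le_mul_of_nonneg_right (le_max_left (a - b) 0) h0]
    · have hm : max (a - b) 0 ≤ a + b := max_le (by linarith) (by linarith)
      rw [abs_of_nonpos h0]
      nlinarith [mul_le_mul_of_nonpos_right hm h0]
  have htt : max (a - b) 0 * t = a * t - b * |t| := by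
    rw [abs_of_nonneg ht]
    rcases le_total 0 (a - b) with h0 | h0
    · rw [max_eq_left h0]; ring
    · rw [max_eq_right h0] at hst
      -- The threshold vanishes here, which forces `t = 0`.
      have h0t : t = 0 := by
        have hβ : (β : ℝ) ≠ 0 := by positivity
        exact eq_zero_of_pow_eq_zero ((mul_eq_zero.mp hst).resolve_left hβ)
      simp [h0t]
  linarith

/-- The function `f(w) = (1/n) w^β D − α w + (λ/(n p²)) |w| D` has a
global minimizer over ℝ, this minimizer is unique, and it equals
`w* = ( S(nα/D, λ/p²) / β )^{1/(β−1)}`. -/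
theorem lwkmeans_one_dim_minimizer
    (n p : ℕ) (hn : 0 < n) (hp : 0 < p)
    (β : ℕ) (hβ2 : 2 ≤ β) (hβeven : Even β)
    (D α lam : ℝ) (hD : 0 < D) (hα : 0 ≤ α) (hlam : 0 ≤ lam) :
    (∀ w : ℝ,
      (1 / (n : ℝ)) * ((softThresh ((n : ℝ) * α / D) (lam / (p : ℝ) ^ 2) / (β : ℝ))
          ^ ((1 : ℝ) / ((β : ℝ) - 1))) ^ β * D
        - α * ((softThresh ((n : ℝ) * α / D) (lam / (p : ℝ) ^ 2) / (β : ℝ))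
          ^ ((1 : ℝ) / ((β : ℝ) - 1)))
        + (lam / ((n : ℝ) * (p : ℝ) ^ 2))
          * |(softThresh ((n : ℝ) * α / D) (lam / (p : ℝ) ^ 2) / (β : ℝ))
              ^ ((1 : ℝ) / ((β : ℝ) - 1))| * D
      ≤ (1 / (n : ℝ)) * w ^ β * D - α * w
          + (lam / ((n : ℝ) * (p : ℝ) ^ 2)) * |w| * D) ∧
    (∀ w : ℝ,
      (∀ v : ℝ,
        (1 / (n : ℝ)) * w ^ β * D - α * w + (lam / ((n : ℝ) * (p : ℝ) ^ 2)) * |w| * D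
          ≤ (1 / (n : ℝ)) * v ^ β * D - α * v
              + (lam / ((n : ℝ) * (p : ℝ) ^ 2)) * |v| * D) →
      w = (softThresh ((n : ℝ) * α / D) (lam / (p : ℝ) ^ 2) / (β : ℝ))
            ^ ((1 : ℝ) / ((β : ℝ) - 1))) := by
  have hn' : (0 : ℝ) < n := by exact_mod_cast hn
  have hp' : (0 : ℝ) < p := by exact_mod_cast hp
  have ha : 0 ≤ (n : ℝ) * α / D := by positivity
  have hb : 0 ≤ lam / (p : ℝ) ^ 2 := by positivity
  rw [softThresh_eq_max ha hb]
  have hst := root_stationary hβ2 (le_max_right ((n : ℝ) * α / D - lam / (p : ℝ) ^ 2) 0)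
  have ht : 0 ≤ (max ((n : ℝ) * α / D - lam / (p : ℝ) ^ 2) 0 / (β : ℝ))
      ^ ((1 : ℝ) / ((β : ℝ) - 1)) :=
    Real.rpow_nonneg (div_nonneg (le_max_right _ _) (by positivity)) _
  generalize (max ((n : ℝ) * α / D - lam / (p : ℝ) ^ 2) 0 / (β : ℝ))
      ^ ((1 : ℝ) / ((β : ℝ) - 1)) = t at hst ht ⊢
  have hscale : ∀ w : ℝ,
      (1 / (n : ℝ)) * w ^ β * D - α * w + (lam / ((n : ℝ) * (p : ℝ) ^ 2)) * |w| * D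
        = D / n * (w ^ β - (n : ℝ) * α / D * w + lam / (p : ℝ) ^ 2 * |w|) := by
    intro w
    field_simp
  have key : ∀ w : ℝ, w ≠ t →
      (1 / (n : ℝ)) * t ^ β * D - α * t + (lam / ((n : ℝ) * (p : ℝ) ^ 2)) * |t| * D
        < (1 / (n : ℝ)) * w ^ β * D - α * w + (lam / ((n : ℝ) * (p : ℝ) ^ 2)) * |w| * D := by
    intro w hne
    rw [hscale, hscale]
    exact mul_lt_mul_of_pos_left (lwkmeans_objective_lt hβ2 hβeven ha hb ht hst hne)
      (div_pos hD hn')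
  refine ⟨fun w => ?_, fun w hw => ?_⟩
  · rcases eq_or_ne w t with rfl | hne
    · exact le_rfl
    · exact (key w hne).le
  · by_contra hne
    exact absurd (hw t) (not_le.mpr (key w hne))
end

section
/- Let n, p be positive integers, let β ≥ 2 be an even integer, let α ≥ 0, λ ≥ 0, and let D_1, …, D_p > 0 be real constants. Then the function P : ℝ^p → ℝ defined by P(W) = (1/n) Σ_{l=1}^p (w_l^β + (λ/p²)|w_l|) D_l − α Σ_{l=1}^p w_l, where W = (w_1, …, w_p), has a global minimizer over ℝ^p; this minimizer is unique and its coordinates are given by w_l* = ( S(nα/D_l, λ/p²) / β )^{1/(β−1)} for every l ∈ {1, …, p}. -/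
/-- Strict tangent line inequality for an even power. -/
lemma tangent_lt_pow {β : ℕ} (hβ2 : 2 ≤ β) (hβeven : Even β) {t w : ℝ} (hw : w ≠ t) :
    t ^ β + β * t ^ (β - 1) * (w - t) < w ^ β := by
  have hc : StrictConvexOn ℝ Set.univ (fun x : ℝ => x ^ β) :=
    hβeven.strictConvexOn_pow (by omega)
  have hd : HasDerivAt (fun x : ℝ => x ^ β) (β * t ^ (β - 1)) t := hasDerivAt_pow β t
  rcases lt_or_gt_of_ne hw with h | h
  · have := hc.slope_lt_of_hasDerivAt (Set.mem_univ w) (Set.mem_univ t) h hd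
    rw [slope_def_field, div_lt_iff₀ (sub_pos.2 h)] at this
    linarith
  · have := hc.lt_slope_of_hasDerivAt (Set.mem_univ t) (Set.mem_univ w) h hd
    rw [slope_def_field, lt_div_iff₀ (sub_pos.2 h)] at this
    linarith

/-- The one-coordinate problem: the soft-thresholded root is the strict global minimizer of
`w ↦ w ^ β + y * |w| - x * w`. -/
lemma scalar_lt {β : ℕ} (hβ2 : 2 ≤ β) (hβeven : Even β) {x y t w : ℝ} (hx : 0 ≤ x) (hy : 0 ≤ y)
    (ht : t = (softThresh x y / (β : ℝ)) ^ ((1 : ℝ) / ((β : ℝ) - 1))) (hw : w ≠ t) :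
    t ^ β + y * |t| - x * t < w ^ β + y * |w| - x * w := by
  have hβ0 : (0 : ℝ) < β := by exact_mod_cast (by omega : 0 < β)
  have hcast : ((β - 1 : ℕ) : ℝ) = (β : ℝ) - 1 := by
    rw [Nat.cast_sub (by omega), Nat.cast_one]
  have hs : 0 ≤ softThresh x y := by
    unfold softThresh
    split_ifs <;> linarith
  have ht0 : 0 ≤ t := ht ▸ Real.rpow_nonneg (div_nonneg hs hβ0.le) _
  have hpow : (β : ℝ) * t ^ (β - 1) = softThresh x y := by
    rw [ht, one_div, ← hcast, Real.rpow_inv_natCast_pow (div_nonneg hs hβ0.le) (by omega)]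
    field_simp
  have htan := tangent_lt_pow hβ2 hβeven hw
  rw [hpow] at htan
  rw [abs_of_nonneg ht0]
  by_cases hxy : x > y
  · have hS : softThresh x y = x - y := if_pos hxy
    rw [hS] at htan
    linarith [mul_le_mul_of_nonneg_left (le_abs_self w) hy]
  · have hS : softThresh x y = 0 := by
      rw [softThresh, if_neg hxy, if_neg (by linarith)]
    have htz : t = 0 := by
      rw [hS, mul_eq_zero] at hpow
      exact eq_zero_of_pow_eq_zero (hpow.resolve_left hβ0.ne')
    rw [hS] at htan
    subst htz
    linarith [mul_le_mul_of_nonneg_left (le_abs_self w) hx,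
      mul_le_mul_of_nonneg_right (not_lt.1 hxy) (abs_nonneg w)]

/-- The objective as a positively weighted sum of one-coordinate objectives. -/
lemma objective_separates {n p : ℕ} (hn : 0 < n) (β : ℕ) (α y : ℝ) (D : Fin p → ℝ)
    (hD : ∀ l, 0 < D l) (W : Fin p → ℝ) :
    (1 / (n : ℝ)) * ∑ l, (W l ^ β + y * |W l|) * D l - α * ∑ l, W l
      = ∑ l, D l / n * (W l ^ β + y * |W l| - n * α / D l * W l) := by
  have hn' : (n : ℝ) ≠ 0 := by exact_mod_cast hn.ne'
  rw [Finset.mul_sum, Finset.mul_sum, ← Finset.sum_sub_distrib]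
  refine Finset.sum_congr rfl fun l _ => ?_
  have := (hD l).ne'
  field_simp

/-- The function
`P(W) = (1/n) Σ_l (w_l^β + (λ/p²)|w_l|) D_l − α Σ_l w_l` on ℝ^p has a global
minimizer; this minimizer is unique and its coordinates are
`w_l* = ( S(nα/D_l, λ/p²) / β )^{1/(β−1)}`. -/
theorem lwkmeans_weight_subproblem_minimizer
    (n p : ℕ) (hn : 0 < n) (hp : 0 < p)
    (β : ℕ) (hβ2 : 2 ≤ β) (hβeven : Even β)
    (α lam : ℝ) (hα : 0 ≤ α) (hlam : 0 ≤ lam)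
    (D : Fin p → ℝ) (hD : ∀ l, 0 < D l) :
    (∀ W : Fin p → ℝ,
      (1 / (n : ℝ)) * ∑ l, (((softThresh ((n : ℝ) * α / D l) (lam / (p : ℝ) ^ 2) / (β : ℝ))
              ^ ((1 : ℝ) / ((β : ℝ) - 1))) ^ β
            + (lam / (p : ℝ) ^ 2)
              * |(softThresh ((n : ℝ) * α / D l) (lam / (p : ℝ) ^ 2) / (β : ℝ))
                  ^ ((1 : ℝ) / ((β : ℝ) - 1))|) * D l
          - α * ∑ l, (softThresh ((n : ℝ) * α / D l) (lam / (p : ℝ) ^ 2) / (β : ℝ))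
              ^ ((1 : ℝ) / ((β : ℝ) - 1))
        ≤ (1 / (n : ℝ)) * ∑ l, (W l ^ β + (lam / (p : ℝ) ^ 2) * |W l|) * D l
            - α * ∑ l, W l) ∧
    (∀ W : Fin p → ℝ,
      (∀ V : Fin p → ℝ,
        (1 / (n : ℝ)) * ∑ l, (W l ^ β + (lam / (p : ℝ) ^ 2) * |W l|) * D l
            - α * ∑ l, W l
          ≤ (1 / (n : ℝ)) * ∑ l, (V l ^ β + (lam / (p : ℝ) ^ 2) * |V l|) * D l
              - α * ∑ l, V l) →
      ∀ l, W l = (softThresh ((n : ℝ) * α / D l) (lam / (p : ℝ) ^ 2) / (β : ℝ))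
            ^ ((1 : ℝ) / ((β : ℝ) - 1))) := by
  have hn' : (0 : ℝ) < n := by exact_mod_cast hn
  have hy : 0 ≤ lam / (p : ℝ) ^ 2 := by positivity
  have hx : ∀ l, 0 ≤ (n : ℝ) * α / D l := fun l =>
    div_nonneg (mul_nonneg hn'.le hα) (hD l).le
  obtain ⟨T, hT⟩ : ∃ T : Fin p → ℝ, ∀ l, T l =
      (softThresh ((n : ℝ) * α / D l) (lam / (p : ℝ) ^ 2) / (β : ℝ))
        ^ ((1 : ℝ) / ((β : ℝ) - 1)) := ⟨_, fun _ => rfl⟩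
  simp only [← hT, objective_separates hn β α (lam / (p : ℝ) ^ 2) D hD]
  have hlt : ∀ (W : Fin p → ℝ) (l : Fin p), W l ≠ T l →
      D l / n * (T l ^ β + lam / (p : ℝ) ^ 2 * |T l| - n * α / D l * T l)
        < D l / n * (W l ^ β + lam / (p : ℝ) ^ 2 * |W l| - n * α / D l * W l) := fun W l h =>
    mul_lt_mul_of_pos_left (scalar_lt hβ2 hβeven (hx l) hy (hT l) h) (div_pos (hD l) hn')
  have hle : ∀ (W : Fin p → ℝ) (l : Fin p),
      D l / n * (T l ^ β + lam / (p : ℝ) ^ 2 * |T l| - n * α / D l * T l)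
        ≤ D l / n * (W l ^ β + lam / (p : ℝ) ^ 2 * |W l| - n * α / D l * W l) := fun W l => by
    by_cases h : W l = T l
    · rw [h]
    · exact (hlt W l h).le
  refine ⟨fun W => Finset.sum_le_sum fun l _ => hle W l, fun W hW l => ?_⟩
  by_contra h
  exact absurd (hW T) (not_le.2 (Finset.sum_lt_sum (fun i _ => hle W i)
    ⟨l, Finset.mem_univ l, hlt W l h⟩))
end

section
/- Let x_1, …, x_n ∈ ℝ^p be data points, let k ≥ 1 be an integer, let β ≥ 2 be an even integer, and let λ ≥ 0, α ∈ ℝ. For a weight vector W = (w_1,…,w_p) ∈ ℝ^p and a nonempty set A ⊆ ℝ^p with at most k points, define Φ_n(W, A) = (1/n) Σ_{i=1}^n min_{a ∈ A} Σ_{l=1}^p (w_l^β + (λ/p²)|w_l|)(x_{i,l} − a_l)² − α Σ_{l=1}^p w_l. Suppose the pair (W*, A*) attains the infimum of Φ_n over all such pairs (W, A), and suppose W* ≠ 0. Let c : {1,…,n} → A* be any map such that c(i) minimizes a ↦ Σ_{l=1}^p ((w*_l)^β + (λ/p²)|w*_l|)(x_{i,l} − a_l)² over A* for each i. Set D*_l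 = Σ_{i=1}^n (x_{i,l} − c(i)_l)² and D_l = Σ_{i=1}^n (x_{i,l} − x̄_l)², where x̄_l = (1/n) Σ_{i=1}^n x_{i,l}. Then there exists l ∈ {1, …, p} such that D*_l ≤ D_l. -/
/-!
Keep the optimal weights `W*` and replace `A*` by the single centroid at the mean `x̄`. With
`v l = (W* l) ^ β + (λ / p²) |W* l|`, optimality of `(W*, A*)` then says
`∑ l, v l * D*_l ≤ ∑ l, v l * D_l`. As `β` is even and `λ ≥ 0`, every `v l` is nonnegative, and
`v l > 0` wherever `W* l ≠ 0`. If `D_l < D*_l` held for every `l`, the reverse strict inequality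
between the weighted sums would follow.
-/


/-- If `(W*, A*)` is a globally optimal pair for the empirical
LW-k-means objective with `W* ≠ 0`, and `c` assigns each data point to a closest
centroid of `A*`, then there is a coordinate `l` whose within-cluster sum of
squares `D*_l` is at most the total sum of squares `D_l` about the mean. -/
theorem lwkmeans_exists_coordinate_wss_le_tss
    (n p k : ℕ) (hn : 0 < n) (hp : 0 < p) (hk : 1 ≤ k)
    (β : ℕ) (hβ2 : 2 ≤ β) (hβeven : Even β)
    (lam : ℝ) (hlam : 0 ≤ lam) (α : ℝ)
    (x : Fin n → Fin p → ℝ)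
    (Wstar : Fin p → ℝ) (Astar : Finset (Fin p → ℝ))
    (hAstarne : Astar.Nonempty) (hAstarcard : Astar.card ≤ k)
    (hWstar : Wstar ≠ 0)
    -- optimality of the pair (W*, A*) for Φ_n
    (hopt : ∀ (W : Fin p → ℝ) (A : Finset (Fin p → ℝ)) (hA : A.Nonempty),
      A.card ≤ k →
      (1 / (n : ℝ)) * ∑ i,
          Astar.inf' hAstarne
            (fun a => ∑ l, (Wstar l ^ β + (lam / (p : ℝ) ^ 2) * |Wstar l|)
              * (x i l - a l) ^ 2)
        - α * ∑ l, Wstar l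
      ≤ (1 / (n : ℝ)) * ∑ i,
          A.inf' hA
            (fun a => ∑ l, (W l ^ β + (lam / (p : ℝ) ^ 2) * |W l|)
              * (x i l - a l) ^ 2)
        - α * ∑ l, W l)
    -- c assigns each point to a minimizing centroid of A*
    (c : Fin n → Fin p → ℝ)
    (hcmem : ∀ i, c i ∈ Astar)
    (hcmin : ∀ i, ∀ a ∈ Astar,
      ∑ l, (Wstar l ^ β + (lam / (p : ℝ) ^ 2) * |Wstar l|) * (x i l - c i l) ^ 2
        ≤ ∑ l, (Wstar l ^ β + (lam / (p : ℝ) ^ 2) * |Wstar l|) * (x i l - a l) ^ 2) :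
    ∃ l : Fin p,
      ∑ i, (x i l - c i l) ^ 2
        ≤ ∑ i, (x i l - (1 / (n : ℝ)) * ∑ j, x j l) ^ 2 := by
  set v : Fin p → ℝ := fun l => Wstar l ^ β + (lam / (p : ℝ) ^ 2) * |Wstar l| with hv
  set m : Fin p → ℝ := fun l => (1 / (n : ℝ)) * ∑ j, x j l with hm
  have hreg : 0 ≤ lam / (p : ℝ) ^ 2 := by positivity
  have hv0 : ∀ l, 0 ≤ v l := fun l =>
    add_nonneg (hβeven.pow_nonneg _) (mul_nonneg hreg (abs_nonneg _))
  obtain ⟨l₀, hl₀⟩ := Function.ne_iff.mp hWstar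
  have hvpos : 0 < v l₀ :=
    add_pos_of_pos_of_nonneg (hβeven.pow_pos hl₀) (mul_nonneg hreg (abs_nonneg _))
  have hinf : ∀ i, Astar.inf' hAstarne (fun a => ∑ l, v l * (x i l - a l) ^ 2)
      = ∑ l, v l * (x i l - c i l) ^ 2 := fun i =>
    le_antisymm (Finset.inf'_le _ (hcmem i)) (Finset.le_inf' _ _ (hcmin i))
  have hswap : ∀ b : Fin n → Fin p → ℝ, ∑ i, ∑ l, v l * (x i l - b i l) ^ 2
      = ∑ l, v l * ∑ i, (x i l - b i l) ^ 2 := fun b => by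
    rw [Finset.sum_comm]
    simp only [Finset.mul_sum]
  have hle : ∑ l, v l * ∑ i, (x i l - c i l) ^ 2 ≤ ∑ l, v l * ∑ i, (x i l - m l) ^ 2 := by
    have h := sub_le_sub_iff_right _ |>.mp
      (hopt Wstar {m} (Finset.singleton_nonempty m) (by simpa using hk))
    have h' := le_of_mul_le_mul_left h (by positivity)
    simp only [Finset.inf'_singleton] at h'
    rw [Finset.sum_congr rfl fun i _ => hinf i, hswap c] at h'
    exact h'.trans_eq (hswap fun _ => m)
  by_contra! hlt
  exact hle.not_gt (Finset.sum_lt_sum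
    (fun l _ => mul_le_mul_of_nonneg_left (hlt l).le (hv0 l))
    ⟨l₀, Finset.mem_univ _, mul_lt_mul_of_pos_left (hlt l₀) hvpos⟩)
end

section
/- Let P be a Borel probability measure on ℝ^p with ∫‖x‖² P(dx) < ∞. Fix an integer k ≥ 1, constants M > 0, b > 0, λ ≥ 0, and an even integer β ≥ 2. For p ∈ ℕ, an even integer β ≥ 2, λ ≥ 0, a weight vector W = (w_1,…,w_p) ∈ ℝ^p and a nonempty finite set A ⊆ ℝ^p, define g_{W,A} : ℝ^p → ℝ by g_{W,A}(x) = min_{a ∈ A} Σ_{l=1}^p (w_l^β + (λ/p²)|w_l|)(x_l − a_l)². Let ξ_k = {A ⊆ ℝ^p : A is nonempty, has at most k points, and A is contained in the closed ball of radius 5M centered at the origin}, equipped with the Hausdorff distance H, and let Γ_k = [0,b]^p. Then for every ε > 0 there exists δ > 0 such that for all W ∈ Γ_k and all A, B ∈ ξ_k with H(A,B) < δ, one has | ∫ g_{W,A}(x) P(dx) − ∫ g_{W,B}(x) P(dx) | < ε. -/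
/-!
Write `c_l = w_l^β + (λ/p²)|w_l|`; on `Γ_k` these weights lie in `[0, C]` with
`C = b^β + (λ/p²) b`. For `a, a'` in the ball of radius `R = 5M`, the factorisation
`(x_l - a_l)² - (x_l - a'_l)² = (a'_l - a_l)(2x_l - a_l - a'_l)` shows that the weighted squared
distances from `x` to `a` and to `a'` differ by at most `‖a - a'‖ · pC(1 + ‖x‖² + 2R)`
(`weightedSq_le_add`). If `H(A,B) < δ`, matching each point of one set with a point of the other at
distance less than `δ` gives `|g_{W,A}(x) - g_{W,B}(x)| ≤ δ · pC(1 + ‖x‖² + 2R)` for every `x`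
(`lwkG_le_add`). The right-hand side is integrable, with integral `δK` where `K` depends on neither
`W`, `A` nor `B`, so `δ = ε / (K + 1)` works.
-/

open MeasureTheory Filter

/-- The LW-k-means integrand
`g_{W,A}(x) = min_{a ∈ A} Σ_l (w_l^β + (λ/p²)|w_l|)(x_l − a_l)²`. -/
noncomputable def lwkG (p β : ℕ) (lam : ℝ)
    (W : EuclideanSpace ℝ (Fin p))
    (A : Finset (EuclideanSpace ℝ (Fin p))) (hA : A.Nonempty)
    (x : EuclideanSpace ℝ (Fin p)) : ℝ :=
  A.inf' hA fun a => ∑ l, (W l ^ β + (lam / (p : ℝ) ^ 2) * |W l|) * (x l - a l) ^ 2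

/-- The weighted squared distance to `a` is Lipschitz in `a` on the ball of radius `R`, with a
constant at most `p C (1 + ‖x‖² + 2R)`; the linear term `2‖x‖` is absorbed into `1 + ‖x‖²`. -/
lemma weightedSq_le_add {p : ℕ} {C R : ℝ} {c : Fin p → ℝ} (hc0 : ∀ l, 0 ≤ c l)
    (hcC : ∀ l, c l ≤ C) {a a' : EuclideanSpace ℝ (Fin p)} (ha : ‖a‖ ≤ R) (ha' : ‖a'‖ ≤ R)
    (x : EuclideanSpace ℝ (Fin p)) :
    ∑ l, c l * (x l - a l) ^ 2 ≤
      ∑ l, c l * (x l - a' l) ^ 2 + dist a' a * (p * C * (1 + ‖x‖ ^ 2 + 2 * R)) := by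
  have hl : ∀ l, c l * (x l - a l) ^ 2 ≤
      c l * (x l - a' l) ^ 2 + dist a' a * (C * (1 + ‖x‖ ^ 2 + 2 * R)) := by
    intro l
    have h1 : |a' l - a l| ≤ dist a' a := by
      rw [dist_eq_norm]; exact PiLp.norm_apply_le (a' - a) l
    have hx : |x l| ≤ ‖x‖ := PiLp.norm_apply_le x l
    have h2 : |a l| ≤ R := (PiLp.norm_apply_le a l).trans ha
    have h3 : |a' l| ≤ R := (PiLp.norm_apply_le a' l).trans ha'
    have h4 : |2 * x l - a l - a' l| ≤ 1 + ‖x‖ ^ 2 + 2 * R := by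
      have := sq_nonneg (‖x‖ - 1)
      rw [abs_le] at *
      constructor <;> nlinarith
    have h5 : (a' l - a l) * (2 * x l - a l - a' l) ≤ dist a' a * (1 + ‖x‖ ^ 2 + 2 * R) :=
      (le_abs_self _).trans (by rw [abs_mul]; gcongr)
    have h0 : 0 ≤ dist a' a * (1 + ‖x‖ ^ 2 + 2 * R) :=
      mul_nonneg dist_nonneg ((abs_nonneg _).trans h4)
    have h6 := mul_le_mul_of_nonneg_left h5 (hc0 l)
    have h7 := mul_le_mul_of_nonneg_right (hcC l) h0
    linarith
  calc _ ≤ ∑ l, (c l * (x l - a' l) ^ 2 + dist a' a * (C * (1 + ‖x‖ ^ 2 + 2 * R))) :=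
        Finset.sum_le_sum fun l _ => hl l
    _ = _ := by
        rw [Finset.sum_add_distrib]
        simp
        ring

/-- Only one half of the Hausdorff condition is needed for a one-sided bound: each point of `B` lies
within `δ` of a point of `A`. -/
lemma lwkG_le_add {p β : ℕ} {lam C R δ : ℝ} {W : EuclideanSpace ℝ (Fin p)}
    (hc0 : ∀ l, 0 ≤ W l ^ β + (lam / (p : ℝ) ^ 2) * |W l|)
    (hcC : ∀ l, W l ^ β + (lam / (p : ℝ) ^ 2) * |W l| ≤ C)
    {A B : Finset (EuclideanSpace ℝ (Fin p))} (hA : A.Nonempty) (hB : B.Nonempty)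
    (hAR : ∀ a ∈ A, ‖a‖ ≤ R) (hBR : ∀ a ∈ B, ‖a‖ ≤ R) (hC : 0 ≤ C)
    (hAB : ∀ a' ∈ B, ∃ a ∈ A, dist a' a < δ) (x : EuclideanSpace ℝ (Fin p)) :
    lwkG p β lam W A hA x ≤
      lwkG p β lam W B hB x + δ * (p * C * (1 + ‖x‖ ^ 2 + 2 * R)) := by
  obtain ⟨a', ha', he⟩ := Finset.exists_mem_eq_inf' hB
    fun a => ∑ l, (W l ^ β + (lam / (p : ℝ) ^ 2) * |W l|) * (x l - a l) ^ 2
  obtain ⟨a, ha, hd⟩ := hAB a' ha'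
  have hR : 0 ≤ R := (norm_nonneg a).trans (hAR a ha)
  unfold lwkG
  rw [he]
  refine (Finset.inf'_le _ ha).trans ((weightedSq_le_add hc0 hcC (hAR a ha) (hBR a' ha') x).trans ?_)
  gcongr

lemma integrable_lwkG {p : ℕ} (β : ℕ) (lam : ℝ) (W : EuclideanSpace ℝ (Fin p))
    {A : Finset (EuclideanSpace ℝ (Fin p))} (hA : A.Nonempty)
    (P : Measure (EuclideanSpace ℝ (Fin p))) [IsProbabilityMeasure P]
    (hP2 : Integrable (fun x => ‖x‖ ^ 2) P) : Integrable (lwkG p β lam W A hA) P := by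
  have hterm : ∀ a : EuclideanSpace ℝ (Fin p), Integrable (fun x : EuclideanSpace ℝ (Fin p) =>
      ∑ l, (W l ^ β + (lam / (p : ℝ) ^ 2) * |W l|) * (x l - a l) ^ 2) P := by
    intro a
    refine integrable_finsetSum _ fun l _ => Integrable.const_mul ?_ _
    refine ((hP2.const_mul 2).add (integrable_const (2 * ‖a‖ ^ 2))).mono'
      (by fun_prop) (ae_of_all _ fun x => ?_)
    have hx : |x l| ≤ |‖x‖| := (PiLp.norm_apply_le x l).trans (le_abs_self _)
    have ha : |a l| ≤ |‖a‖| := (PiLp.norm_apply_le a l).trans (le_abs_self _)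
    rw [← sq_le_sq] at hx ha
    rw [Real.norm_of_nonneg (sq_nonneg _)]
    simp only [Pi.add_apply]
    nlinarith [sq_nonneg (x l + a l)]
  have : lwkG p β lam W A hA = A.inf' hA fun a x =>
      ∑ l, (W l ^ β + (lam / (p : ℝ) ^ 2) * |W l|) * (x l - a l) ^ 2 := by
    ext x
    simp [lwkG, Finset.inf'_apply]
  rw [this]
  exact Finset.inf'_induction hA _ (p := fun f => Integrable f P)
    (fun _ hf _ hg => hf.inf hg) fun a _ => hterm a

/-- Equicontinuity, uniformly in the weight vector `W ∈ Γ_k = [0,b]^p`,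
of `A ↦ ∫ g_{W,A} dP` on `ξ_k` (nonempty sets of at most `k` points contained in the
closed ball of radius `5M`) equipped with the Hausdorff distance. -/
theorem lwkmeans_equicontinuous_in_centroids
    (p : ℕ) (hp : 0 < p)
    (k : ℕ) (hk : 1 ≤ k) (M b lam : ℝ) (hM : 0 < M) (hb : 0 < b) (hlam : 0 ≤ lam)
    (β : ℕ) (hβ2 : 2 ≤ β) (hβeven : Even β)
    (P : Measure (EuclideanSpace ℝ (Fin p))) [IsProbabilityMeasure P]
    (hP2 : Integrable (fun x => ‖x‖ ^ 2) P) :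
    ∀ ε : ℝ, 0 < ε → ∃ δ : ℝ, 0 < δ ∧
      ∀ (W : EuclideanSpace ℝ (Fin p)), (∀ l, W l ∈ Set.Icc (0 : ℝ) b) →
      ∀ (A B : Finset (EuclideanSpace ℝ (Fin p)))
        (hA : A.Nonempty) (hB : B.Nonempty),
        A.card ≤ k → B.card ≤ k →
        (∀ a ∈ A, ‖a‖ ≤ 5 * M) → (∀ a ∈ B, ‖a‖ ≤ 5 * M) →
        Metric.hausdorffDist (↑A : Set (EuclideanSpace ℝ (Fin p))) (↑B) < δ →
        |∫ x, lwkG p β lam W A hA x ∂P - ∫ x, lwkG p β lam W B hB x ∂P| < ε := by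
  intro ε hε
  set C : ℝ := b ^ β + (lam / (p : ℝ) ^ 2) * b with hCdef
  have hC : 0 ≤ C := by positivity
  set L : EuclideanSpace ℝ (Fin p) → ℝ :=
    fun x => p * C * (1 + ‖x‖ ^ 2 + 2 * (5 * M)) with hL
  have hLint : Integrable L P :=
    (((integrable_const 1).add hP2).add (integrable_const _)).const_mul _
  have hK : 0 ≤ ∫ x, L x ∂P := integral_nonneg fun x => by simp only [hL, Pi.zero_apply]; positivity
  refine ⟨ε / (∫ x, L x ∂P + 1), by positivity, ?_⟩
  intro W hW A B hA hB _ _ hAR hBR hH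
  set δ := ε / (∫ x, L x ∂P + 1) with hδ
  have hc0 : ∀ l, 0 ≤ W l ^ β + (lam / (p : ℝ) ^ 2) * |W l| := fun l => by
    have := (hW l).1
    positivity
  have hcC : ∀ l, W l ^ β + (lam / (p : ℝ) ^ 2) * |W l| ≤ C := fun l => by
    have h0 := (hW l).1
    have h1 := (hW l).2
    rw [abs_of_nonneg h0, hCdef]
    gcongr
  have hfin : Metric.hausdorffEDist (A : Set (EuclideanSpace ℝ (Fin p))) B ≠ ⊤ :=
    Metric.hausdorffEDist_ne_top_of_nonempty_of_bounded hA hB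
      A.finite_toSet.isBounded B.finite_toSet.isBounded
  have hle : ∀ x, |lwkG p β lam W A hA x - lwkG p β lam W B hB x| ≤ δ * L x := by
    intro x
    have h1 := lwkG_le_add hc0 hcC hA hB hAR hBR hC (δ := δ) (fun a' ha' => by
      obtain ⟨a, ha, h⟩ := Metric.exists_dist_lt_of_hausdorffDist_lt' ha' hH hfin
      exact ⟨a, ha, by rwa [dist_comm]⟩) x
    have h2 := lwkG_le_add hc0 hcC hB hA hBR hAR hC (δ := δ)
      (fun a ha => Metric.exists_dist_lt_of_hausdorffDist_lt ha hH hfin) x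
    rw [abs_le]
    constructor <;> simp only [hL] <;> linarith
  rw [← integral_sub (integrable_lwkG β lam W hA P hP2) (integrable_lwkG β lam W hB P hP2)]
  calc |∫ x, (lwkG p β lam W A hA x - lwkG p β lam W B hB x) ∂P|
      ≤ ∫ x, δ * L x ∂P := by
        rw [← Real.norm_eq_abs]
        exact norm_integral_le_of_norm_le (hLint.const_mul δ) (ae_of_all _ hle)
    _ = ε * (∫ x, L x ∂P) / (∫ x, L x ∂P + 1) := by rw [integral_const_mul, hδ]; ring
    _ < ε := by
        rw [div_lt_iff₀ (by positivity)]
        linarith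
end

section
/- Let P be a Borel probability measure on ℝ^p with ∫‖x‖² P(dx) < ∞. Fix an integer k ≥ 1, constants M > 0, b > 0, λ ≥ 0, and an even integer β ≥ 2. For p ∈ ℕ, an even integer β ≥ 2, λ ≥ 0, a weight vector W = (w_1,…,w_p) ∈ ℝ^p and a nonempty finite set A ⊆ ℝ^p, define g_{W,A} : ℝ^p → ℝ by g_{W,A}(x) = min_{a ∈ A} Σ_{l=1}^p (w_l^β + (λ/p²)|w_l|)(x_l − a_l)². Let ξ_k = {A ⊆ ℝ^p : A is nonempty, has at most k points, and A is contained in the closed ball of radius 5M centered at the origin} and Γ_k = [0,b]^p. Then for every ε > 0 there exists δ > 0 such that for all A ∈ ξ_k and all W, W' ∈ Γ_k with ‖W − W'‖ < δ, one has | ∫ g_{W,A}(x) P(dx) − ∫ g_{W',A}(x) P(dx) | < ε. -/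
/-!
The coefficient `t ↦ t ^ β + (λ/p²)|t|` is Lipschitz on `[0, b]`, with constant
`L = β b^(β-1) + λ/p²` (`lwk_coeff_lipschitz`). For `‖a‖ ≤ R`, the weighted square distances from
`x` to `a` for the weights `W` and `W'` therefore differ by at most
`L ‖W - W'‖ ‖x - a‖² ≤ L ‖W - W'‖ (2‖x‖² + 2R²)`, a bound that does not depend on `a`, so it
survives the minimum over `A` (`lwkG_sub_le`). Since `‖x‖²` is integrable, integrating gives a
Lipschitz bound in `W` that is uniform in `A`. The same pointwise bound with `W' = 0`, where `g`
vanishes, yields the integrability of `g_{W,A}`.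
-/

open MeasureTheory Filter

lemma lwk_coeff_lipschitz {b c : ℝ} (hc : 0 ≤ c) (β : ℕ) {s t : ℝ}
    (hs : s ∈ Set.Icc 0 b) (ht : t ∈ Set.Icc 0 b) :
    |(s ^ β + c * |s|) - (t ^ β + c * |t|)| ≤ (β * b ^ (β - 1) + c) * |s - t| := by
  have h1 : |s ^ β - t ^ β| ≤ |s - t| * β * b ^ (β - 1) := by
    refine (abs_pow_sub_pow_le s t β).trans ?_
    gcongr
    rw [abs_of_nonneg hs.1, abs_of_nonneg ht.1]
    exact max_le hs.2 ht.2
  rw [abs_of_nonneg hs.1, abs_of_nonneg ht.1]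
  calc |(s ^ β + c * s) - (t ^ β + c * t)| = |(s ^ β - t ^ β) + c * (s - t)| := by ring_nf
    _ ≤ |s ^ β - t ^ β| + |c * (s - t)| := abs_add_le _ _
    _ ≤ (β * b ^ (β - 1) + c) * |s - t| := by
        rw [abs_mul, abs_of_nonneg hc]; linarith

lemma lwk_term_sub_le {p : ℕ} {b c R : ℝ} (hb : 0 < b) (hc : 0 ≤ c) (β : ℕ)
    {W W' : EuclideanSpace ℝ (Fin p)}
    (hW : ∀ l, W l ∈ Set.Icc (0 : ℝ) b) (hW' : ∀ l, W' l ∈ Set.Icc (0 : ℝ) b)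
    (x a : EuclideanSpace ℝ (Fin p)) (ha : ‖a‖ ≤ R) :
    (∑ l, (W l ^ β + c * |W l|) * (x l - a l) ^ 2)
      ≤ (∑ l, (W' l ^ β + c * |W' l|) * (x l - a l) ^ 2)
        + (β * b ^ (β - 1) + c) * ‖W - W'‖ * (2 * ‖x‖ ^ 2 + 2 * R ^ 2) := by
  have hdist : ‖x - a‖ ^ 2 ≤ 2 * ‖x‖ ^ 2 + 2 * R ^ 2 := by
    have h1 : ‖x - a‖ ≤ ‖x‖ + R := (norm_sub_le x a).trans (by linarith)
    nlinarith [sq_nonneg (‖x‖ - R), norm_nonneg (x - a)]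
  have hnorm : ‖x - a‖ ^ 2 = ∑ l, (x l - a l) ^ 2 := by
    simp [EuclideanSpace.norm_sq_eq]
  have hsum : ∑ l, ((W l ^ β + c * |W l|) * (x l - a l) ^ 2
      - (W' l ^ β + c * |W' l|) * (x l - a l) ^ 2)
      ≤ ∑ l, (β * b ^ (β - 1) + c) * ‖W - W'‖ * (x l - a l) ^ 2 := by
    refine Finset.sum_le_sum fun l _ => ?_
    rw [← sub_mul]
    gcongr
    refine (le_abs_self _).trans ((lwk_coeff_lipschitz hc β (hW l) (hW' l)).trans ?_)
    gcongr
    simpa using PiLp.norm_apply_le (W - W') l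
  rw [Finset.sum_sub_distrib, ← Finset.mul_sum, ← hnorm] at hsum
  have : (β * b ^ (β - 1) + c) * ‖W - W'‖ * ‖x - a‖ ^ 2
      ≤ (β * b ^ (β - 1) + c) * ‖W - W'‖ * (2 * ‖x‖ ^ 2 + 2 * R ^ 2) := by gcongr
  linarith

/-- One-sided pointwise bound; exchanging `W` and `W'` bounds the absolute difference. -/
lemma lwkG_sub_le {p : ℕ} {b lam R : ℝ} (hb : 0 < b) (hlam : 0 ≤ lam) (β : ℕ)
    (A : Finset (EuclideanSpace ℝ (Fin p))) (hA : A.Nonempty) (hR : ∀ a ∈ A, ‖a‖ ≤ R)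
    {W W' : EuclideanSpace ℝ (Fin p)}
    (hW : ∀ l, W l ∈ Set.Icc (0 : ℝ) b) (hW' : ∀ l, W' l ∈ Set.Icc (0 : ℝ) b)
    (x : EuclideanSpace ℝ (Fin p)) :
    lwkG p β lam W A hA x - lwkG p β lam W' A hA x
      ≤ (β * b ^ (β - 1) + lam / (p : ℝ) ^ 2) * ‖W - W'‖ * (2 * ‖x‖ ^ 2 + 2 * R ^ 2) := by
  -- Test `W` against a minimiser for `W'`.
  obtain ⟨a, haA, ha⟩ := Finset.exists_mem_eq_inf' hA
    fun a => ∑ l, (W' l ^ β + (lam / (p : ℝ) ^ 2) * |W' l|) * (x l - a l) ^ 2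
  have h1 : lwkG p β lam W A hA x
      ≤ ∑ l, (W l ^ β + (lam / (p : ℝ) ^ 2) * |W l|) * (x l - a l) ^ 2 :=
    Finset.inf'_le (fun a : EuclideanSpace ℝ (Fin p) =>
      ∑ l, (W l ^ β + (lam / (p : ℝ) ^ 2) * |W l|) * (x l - a l) ^ 2) haA
  have h2 := lwk_term_sub_le hb (by positivity : 0 ≤ lam / (p : ℝ) ^ 2) β hW hW' x a (hR a haA)
  have h3 : lwkG p β lam W' A hA x
      = ∑ l, (W' l ^ β + (lam / (p : ℝ) ^ 2) * |W' l|) * (x l - a l) ^ 2 := ha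
  linarith

lemma lwkG_abs_sub_le {p : ℕ} {b lam R : ℝ} (hb : 0 < b) (hlam : 0 ≤ lam) (β : ℕ)
    (A : Finset (EuclideanSpace ℝ (Fin p))) (hA : A.Nonempty) (hR : ∀ a ∈ A, ‖a‖ ≤ R)
    {W W' : EuclideanSpace ℝ (Fin p)}
    (hW : ∀ l, W l ∈ Set.Icc (0 : ℝ) b) (hW' : ∀ l, W' l ∈ Set.Icc (0 : ℝ) b)
    (x : EuclideanSpace ℝ (Fin p)) :
    |lwkG p β lam W A hA x - lwkG p β lam W' A hA x|
      ≤ (β * b ^ (β - 1) + lam / (p : ℝ) ^ 2) * ‖W - W'‖ * (2 * ‖x‖ ^ 2 + 2 * R ^ 2) := by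
  rw [abs_sub_le_iff]
  refine ⟨lwkG_sub_le hb hlam β A hA hR hW hW' x, ?_⟩
  rw [norm_sub_rev]
  exact lwkG_sub_le hb hlam β A hA hR hW' hW x

lemma lwkG_continuous (p β : ℕ) (lam : ℝ) (W : EuclideanSpace ℝ (Fin p))
    (A : Finset (EuclideanSpace ℝ (Fin p))) (hA : A.Nonempty) :
    Continuous (lwkG p β lam W A hA) := by
  unfold lwkG
  refine Continuous.finset_inf'_apply hA fun a _ => ?_
  fun_prop

lemma lwkG_zero (p β : ℕ) (hβ : β ≠ 0) (lam : ℝ)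
    (A : Finset (EuclideanSpace ℝ (Fin p))) (hA : A.Nonempty) (x : EuclideanSpace ℝ (Fin p)) :
    lwkG p β lam 0 A hA x = 0 := by
  simp [lwkG, hβ]

lemma lwkG_integrable {p : ℕ} {b lam R : ℝ} (hb : 0 < b) (hlam : 0 ≤ lam) {β : ℕ} (hβ : β ≠ 0)
    (P : Measure (EuclideanSpace ℝ (Fin p)))
    (hP : Integrable (fun x => 2 * ‖x‖ ^ 2 + 2 * R ^ 2) P)
    (A : Finset (EuclideanSpace ℝ (Fin p))) (hA : A.Nonempty) (hR : ∀ a ∈ A, ‖a‖ ≤ R)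
    {W : EuclideanSpace ℝ (Fin p)} (hW : ∀ l, W l ∈ Set.Icc (0 : ℝ) b) :
    Integrable (lwkG p β lam W A hA) P := by
  refine (hP.const_mul ((β * b ^ (β - 1) + lam / (p : ℝ) ^ 2) * ‖W - 0‖)).mono'
    (lwkG_continuous p β lam W A hA).aestronglyMeasurable (ae_of_all _ fun x => ?_)
  have h := lwkG_abs_sub_le hb hlam β A hA hR hW (W' := 0) (fun l => by simp [hb.le]) x
  rwa [lwkG_zero p β hβ, sub_zero] at h



/-- Equicontinuity, uniformly in the set `A ∈ ξ_k` of candidate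
centroids (nonempty, at most `k` points, contained in the closed ball of radius
`5M`), of the map `W ↦ ∫ g_{W,A} dP` on `Γ_k = [0,b]^p` with the Euclidean norm. -/
theorem lwkmeans_equicontinuous_in_weights
    (p : ℕ) (hp : 0 < p)
    (k : ℕ) (hk : 1 ≤ k) (M b lam : ℝ) (hM : 0 < M) (hb : 0 < b) (hlam : 0 ≤ lam)
    (β : ℕ) (hβ2 : 2 ≤ β) (hβeven : Even β)
    (P : Measure (EuclideanSpace ℝ (Fin p))) [IsProbabilityMeasure P]
    (hP2 : Integrable (fun x => ‖x‖ ^ 2) P) :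
    ∀ ε : ℝ, 0 < ε → ∃ δ : ℝ, 0 < δ ∧
      ∀ (A : Finset (EuclideanSpace ℝ (Fin p))) (hA : A.Nonempty),
        A.card ≤ k → (∀ a ∈ A, ‖a‖ ≤ 5 * M) →
      ∀ (W W' : EuclideanSpace ℝ (Fin p)),
        (∀ l, W l ∈ Set.Icc (0 : ℝ) b) → (∀ l, W' l ∈ Set.Icc (0 : ℝ) b) →
        ‖W - W'‖ < δ →
        |∫ x, lwkG p β lam W A hA x ∂P - ∫ x, lwkG p β lam W' A hA x ∂P| < ε := by
  intro ε hε
  have hQ : Integrable (fun x : EuclideanSpace ℝ (Fin p) => 2 * ‖x‖ ^ 2 + 2 * (5 * M) ^ 2) P :=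
    (hP2.const_mul 2).add (integrable_const _)
  set L : ℝ := β * b ^ (β - 1) + lam / (p : ℝ) ^ 2 with hL
  set K : ℝ := ∫ x, (2 * ‖x‖ ^ 2 + 2 * (5 * M) ^ 2) ∂P with hK
  have hL0 : 0 ≤ L := by positivity
  have hK0 : 0 ≤ K := integral_nonneg fun x => by positivity
  -- The summand `1` keeps the denominator positive even if `L * K` were zero.
  refine ⟨ε / (L * K + 1), by positivity, fun A hA _ hR W W' hW hW' hd => ?_⟩
  have hβ : β ≠ 0 := by lia
  rw [← integral_sub (lwkG_integrable hb hlam hβ P hQ A hA hR hW)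
    (lwkG_integrable hb hlam hβ P hQ A hA hR hW')]
  have h1 : |∫ x, (lwkG p β lam W A hA x - lwkG p β lam W' A hA x) ∂P| ≤ L * ‖W - W'‖ * K := by
    rw [hK, ← integral_const_mul, ← Real.norm_eq_abs]
    exact norm_integral_le_of_norm_le (hQ.const_mul _)
      (ae_of_all _ fun x => lwkG_abs_sub_le hb hlam β A hA hR hW hW' x)
  rw [lt_div_iff₀ (by positivity)] at hd
  nlinarith [norm_nonneg (W - W')]
end
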